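/- For every finitely supported function φ : ℕ₀ → ℝ with φ(0) = 0, one has Σ_{n=0}^{∞} (φ(n) − φ(n+1))² ≥ Σ_{n=1}^{∞} w(n)·φ(n)², where w(n) := 2 − (1 + 1/n)^{1/2} − (1 − 1/n)^{1/2} for n ≥ 1 (so in particular w(1) = 2 − √2). Moreover, w(n) > 1/(4n²) for every integer n ≥ 1. -/

import Mathlib

/-!
Writing `φ = u ψ` with `u n = √n`, each edge of the path contributes
`(φ n - φ (n + 1))² = u n (u n - u (n + 1)) (ψ n)² + u (n + 1) (u (n + 1) - u n) (ψ (n + 1))²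
  + u n u (n + 1) (ψ n - ψ (n + 1))²`.
Collecting the first two terms by vertices, the vertex `n` receives the coefficient
`-Δu(n) / u(n) = w(n)` in front of `(φ n)²`. The remaining energy is nonnegative, and so is the
boundary term at the right end, because `u` is increasing.
-/

open Finset

theorem sum_range_sq_mul_sub_mul_succ {R : Type*} [CommRing R] (u ψ : ℕ → R) (N : ℕ) :
    ∑ n ∈ range N, (u n * ψ n - u (n + 1) * ψ (n + 1)) ^ 2 =
      ∑ n ∈ range N, (2 * u (n + 1) - u n - u (n + 2)) * u (n + 1) * ψ (n + 1) ^ 2 +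
        ∑ n ∈ range N, u n * u (n + 1) * (ψ n - ψ (n + 1)) ^ 2 +
        u N * (u (N + 1) - u N) * ψ N ^ 2 - u 0 * (u 1 - u 0) * ψ 0 ^ 2 := by
  induction N with
  | zero => simp
  | succ N ih =>
    simp only [sum_range_succ, ih]
    ring

theorem sum_range_laplacian_div_mul_sq_le {K : Type*} [Field K] [LinearOrder K]
    [IsStrictOrderedRing K] {u φ : ℕ → K} (hu : Monotone u) (hu0 : 0 ≤ u 0) (hu1 : 0 < u 1)
    (hφ0 : φ 0 = 0) (N : ℕ) :
    ∑ n ∈ range N, (2 * u (n + 1) - u n - u (n + 2)) / u (n + 1) * φ (n + 1) ^ 2 ≤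
      ∑ n ∈ range N, (φ n - φ (n + 1)) ^ 2 := by
  have u_nonneg (n : ℕ) : 0 ≤ u n := hu0.trans (hu n.zero_le)
  have u_succ_ne (n : ℕ) : u (n + 1) ≠ 0 := (hu1.trans_le (hu (Nat.le_add_left 1 n))).ne'
  set ψ : ℕ → K := fun n => φ n / u n with hψ
  have ψ_zero : ψ 0 = 0 := by simp [hψ, hφ0]
  have φ_eq (n : ℕ) : φ n = u n * ψ n := by
    cases n with
    | zero => rw [hφ0, ψ_zero, mul_zero]
    | succ n => rw [hψ, mul_div_cancel₀ _ (u_succ_ne n)]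
  have weight_eq (n : ℕ) :
      (2 * u (n + 1) - u n - u (n + 2)) / u (n + 1) * φ (n + 1) ^ 2 =
        (2 * u (n + 1) - u n - u (n + 2)) * u (n + 1) * ψ (n + 1) ^ 2 := by
    rw [φ_eq]
    field_simp [u_succ_ne n]
  have energy_nonneg : 0 ≤ ∑ n ∈ range N, u n * u (n + 1) * (ψ n - ψ (n + 1)) ^ 2 :=
    sum_nonneg fun n _ => mul_nonneg (mul_nonneg (u_nonneg n) (u_nonneg _)) (sq_nonneg _)
  have boundary_nonneg : 0 ≤ u N * (u (N + 1) - u N) * ψ N ^ 2 :=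
    mul_nonneg (mul_nonneg (u_nonneg N) (sub_nonneg.2 (hu N.le_succ))) (sq_nonneg _)
  have ground_state := sum_range_sq_mul_sub_mul_succ u ψ N
  simp only [← φ_eq, ← weight_eq, ψ_zero] at ground_state
  linarith

/-- The improved Hardy weight `w`, extended from positive integers to real arguments. It is the
potential `-Δu / u` of `u = √` and is meaningful for `1 ≤ |x|`, where both radicands are
nonnegative. -/
noncomputable def hardyWeight (x : ℝ) : ℝ :=
  2 - √(1 + 1 / x) - √(1 - 1 / x)

theorem laplacian_sqrt_div_sqrt {x : ℝ} (hx : 0 < x) :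
    (2 * √x - √(x - 1) - √(x + 1)) / √x = hardyWeight x := by
  have sqrt_ne : √x ≠ 0 := (Real.sqrt_pos.2 hx).ne'
  rw [hardyWeight, one_add_div hx.ne', one_sub_div hx.ne', Real.sqrt_div' _ hx.le,
    Real.sqrt_div' _ hx.le]
  field_simp
  ring

theorem sum_range_hardyWeight_mul_sq_le {φ : ℕ → ℝ} (hφ0 : φ 0 = 0) (N : ℕ) :
    ∑ n ∈ range N, hardyWeight (n + 1) * φ (n + 1) ^ 2 ≤
      ∑ n ∈ range N, (φ n - φ (n + 1)) ^ 2 := by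
  have sqrt_mono : Monotone fun n : ℕ => √(n : ℝ) :=
    Real.sqrt_monotone.comp Nat.mono_cast
  have weight_eq (n : ℕ) : (2 * √((n + 1 : ℕ) : ℝ) - √n - √((n + 2 : ℕ) : ℝ)) /
      √((n + 1 : ℕ) : ℝ) = hardyWeight (n + 1) := by
    rw [← laplacian_sqrt_div_sqrt (Nat.cast_add_one_pos n)]
    push_cast
    ring_nf
  simpa only [weight_eq] using
    sum_range_laplacian_div_mul_sq_le sqrt_mono (by simp) (by simp) hφ0 N

theorem sqrt_one_add_add_sqrt_one_sub_lt {x : ℝ} (hx0 : x ≠ 0) (hx : |x| ≤ 1) :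
    √(1 + x) + √(1 - x) < 2 - x ^ 2 / 4 := by
  obtain ⟨neg_one_le, le_one⟩ := abs_le.1 hx
  have sq_le_one : x ^ 2 ≤ 1 := (sq_le_one_iff_abs_le_one x).2 hx
  have mul_le : √(1 + x) * √(1 - x) ≤ 1 - x ^ 2 / 2 := calc
    √(1 + x) * √(1 - x) = √(1 + -x ^ 2) := by
      rw [← Real.sqrt_mul (by linarith)]
      ring_nf
    _ ≤ 1 + -x ^ 2 / 2 := Real.sqrt_one_add_le (by linarith)
    _ = 1 - x ^ 2 / 2 := by ring
  refine lt_of_pow_lt_pow_left₀ 2 (by linarith) ?_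
  calc (√(1 + x) + √(1 - x)) ^ 2 = 2 + 2 * (√(1 + x) * √(1 - x)) := by
        rw [add_sq, Real.sq_sqrt (by linarith), Real.sq_sqrt (by linarith)]
        ring
    _ ≤ 4 - x ^ 2 := by linarith
    _ < 4 - x ^ 2 + (x ^ 2 / 4) ^ 2 := lt_add_of_pos_right _ (by positivity)
    _ = (2 - x ^ 2 / 4) ^ 2 := by ring

theorem one_div_four_mul_sq_lt_hardyWeight {x : ℝ} (hx : 1 ≤ |x|) :
    1 / (4 * x ^ 2) < hardyWeight x := by
  have x_ne : x ≠ 0 := abs_pos.1 (one_pos.trans_le hx)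
  have abs_inv_le : |1 / x| ≤ 1 := by
    rw [abs_div, abs_one]
    exact div_le_one_of_le₀ hx (abs_nonneg x)
  have sqrt_bound := sqrt_one_add_add_sqrt_one_sub_lt (one_div_ne_zero x_ne) abs_inv_le
  have sq_eq : 1 / (4 * x ^ 2) = (1 / x) ^ 2 / 4 := by field_simp
  rw [hardyWeight, sq_eq]
  linarith

theorem hardyWeight_pos {x : ℝ} (hx : 1 ≤ |x|) : 0 < hardyWeight x :=
  lt_of_le_of_lt (by positivity) (one_div_four_mul_sq_lt_hardyWeight hx)

theorem summable_sq_sub_succ_of_finite_support {φ : ℕ → ℝ} (hφ : (Function.support φ).Finite) :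
    Summable fun n => (φ n - φ (n + 1)) ^ 2 := by
  have support_succ_finite : (Function.support fun n => φ (n + 1)).Finite :=
    hφ.preimage (add_left_injective 1).injOn
  refine summable_of_hasFiniteSupport ((hφ.union support_succ_finite).subset fun n hn => ?_)
  by_contra h
  simp_all

theorem stmt18_general :
    (∀ φ : ℕ → ℝ, Summable (fun n => (φ n - φ (n + 1)) ^ 2) → φ 0 = 0 →
      Summable (fun n : ℕ => hardyWeight (n + 1) * φ (n + 1) ^ 2) ∧
        ∑' n : ℕ, (φ n - φ (n + 1)) ^ 2 ≥
          ∑' n : ℕ, hardyWeight (n + 1) * φ (n + 1) ^ 2) ∧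
    (∀ x : ℝ, 1 ≤ |x| → 1 / (4 * x ^ 2) < hardyWeight x) := by
  refine ⟨fun φ hφ hφ0 => ?_, fun x => one_div_four_mul_sq_lt_hardyWeight⟩
  have term_nonneg (n : ℕ) : 0 ≤ hardyWeight (n + 1) * φ (n + 1) ^ 2 :=
    mul_nonneg (hardyWeight_pos (le_abs.2 (.inl (by simp)))).le (sq_nonneg _)
  have partial_sum_le (N : ℕ) : ∑ n ∈ range N, hardyWeight (n + 1) * φ (n + 1) ^ 2 ≤
      ∑' n : ℕ, (φ n - φ (n + 1)) ^ 2 :=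
    (sum_range_hardyWeight_mul_sq_le hφ0 N).trans
      (hφ.sum_le_tsum _ fun n _ => sq_nonneg _)
  exact ⟨summable_of_sum_range_le term_nonneg partial_sum_le,
    Real.tsum_le_of_sum_range_le term_nonneg partial_sum_le⟩

/-- an improved discrete Hardy inequality on the half line,
with weight `w(n) = 2 - √(1+1/n) - √(1-1/n) > 1/(4n²)`. -/
theorem stmt18 :
    (∀ φ : ℕ → ℝ, (Function.support φ).Finite → φ 0 = 0 →
      (∑' n : ℕ, (φ n - φ (n + 1)) ^ 2) ≥
        ∑' n : ℕ,
          (2 - Real.sqrt (1 + 1 / ((n : ℝ) + 1)) - Real.sqrt (1 - 1 / ((n : ℝ) + 1))) *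
            φ (n + 1) ^ 2) ∧
    (∀ n : ℕ, 1 ≤ n →
      1 / (4 * (n : ℝ) ^ 2) <
        2 - Real.sqrt (1 + 1 / (n : ℝ)) - Real.sqrt (1 - 1 / (n : ℝ))) := by
  exact ⟨fun φ hφ hφ0 => (stmt18_general.1 φ (summable_sq_sub_succ_of_finite_support hφ) hφ0).2,
    fun n hn => stmt18_general.2 n (by simpa using hn)⟩
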